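/- arXiv:1712.07309 — 2 statements merged into one kernel-verified Lean document; each statement's English description precedes it below -/
import Mathlib

section
/- Set a = √(1/8), b = √(3/8), c = √(1/2), and weights W₁ = π²/18, W₂ = π²/54. Consider the 15 nodes in ℝ⁴: the six points (0,0,0,−c), (0,0,c,0), (b,0,−a,0), (−b,0,−a,0), (0,b,0,a), (0,−b,0,a), each with weight W₁; and the nine points (b,b,a,−a), (b,−b,a,−a), (−b,b,a,−a), (−b,−b,a,−a), (0,b,−c,−a), (0,−b,−c,−a), (b,0,a,c), (−b,0,a,c), (0,0,−c,c), each with weight W₂. All weights are positive, and Σ W_i p(x_i) = ∫_{‖x‖≤1} p(x) dx for every real polynomial p in 4 variables of total degree at most 4. -/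
/-!
Both sides are linear in the polynomial, so it suffices to compare them on monomials `x ^ s` of
degree `|s| ≤ 4`.

The moments of the unit ball come from the Gaussian ones. Since
`exp (-‖x‖²) = ∫_{t ≥ ‖x‖²} exp (-t) dt`, exchanging integrals and using that `x ^ s` is homogeneous
(`integral_ballSq`) gives
`(∫_{‖x‖ ≤ 1} x ^ s) * Γ(|s| / 2 + 3) = ∏ i, ∫ x ^ (s i) exp (-x²) dx` (`ball_moment_mul_Gamma`),
and the one-dimensional moments on the right are explicit multiples of `√π`. On the side of the
rule, `c = 2 a`, `a² = 1 / 8` and `b² = 3 / 8` reduce the comparison to an identity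
in `a` and `b` for each of the finitely many exponents (`rule_monomial`).
-/

open MeasureTheory
open scoped Pointwise

/-- The closed set `{‖y‖² ≤ t}` in `ℝ⁴`, i.e. the Euclidean ball of radius `√t` when `0 ≤ t`. -/
def ballSq (t : ℝ) : Set (Fin 4 → ℝ) := {y | ∑ i, y i ^ 2 ≤ t}

/-- The one-dimensional moment `∫ x ^ k exp (-x²) dx`. -/
noncomputable def gaussMoment (k : ℕ) : ℝ := ∫ x : ℝ, x ^ k * Real.exp (-x ^ 2)

/-- The ratio `gaussMoment k / √π` for `k ≤ 4`; the value `0` for `k > 4` is a placeholder. -/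
noncomputable def gaussRatio : ℕ → ℝ
  | 0 => 1
  | 2 => 1 / 2
  | 4 => 3 / 4
  | _ => 0

lemma gaussMoment_even (n : ℕ) : gaussMoment (2 * n) = Real.Gamma (n + 1 / 2) := by
  have h := integral_comp_abs (f := fun x : ℝ => x ^ (2 * n) * Real.exp (-x ^ 2))
  have h2 := integral_rpow_mul_exp_neg_rpow (p := 2) (q := ((2 * n : ℕ) : ℝ)) (by norm_num)
    (by have : (0 : ℝ) ≤ ((2 * n : ℕ) : ℝ) := Nat.cast_nonneg _
        linarith)
  simp only [Real.rpow_natCast, Real.rpow_ofNat] at h2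
  simp only [sq_abs, (even_two_mul n).pow_abs] at h
  rw [gaussMoment, h, h2, ← mul_assoc]
  norm_num
  congr 1
  ring

lemma gaussMoment_odd {k : ℕ} (hk : Odd k) : gaussMoment k = 0 := by
  have h := integral_neg_eq_self (fun x : ℝ => x ^ k * Real.exp (-x ^ 2)) volume
  simp only [hk.neg_pow, even_two.neg_pow, neg_mul, integral_neg] at h
  rw [gaussMoment]
  linarith

lemma gaussMoment_eq {k : ℕ} (hk : k ≤ 4) : gaussMoment k = √Real.pi * gaussRatio k := by
  interval_cases k
  · have h := gaussMoment_even 0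
    rw [Real.Gamma_nat_add_half] at h
    simpa [gaussRatio] using h
  · simp [gaussMoment_odd (k := 1) (by decide), gaussRatio]
  · have h := gaussMoment_even 1
    rw [Real.Gamma_nat_add_half] at h
    simpa [gaussRatio, div_eq_mul_inv] using h
  · simp [gaussMoment_odd (k := 3) (by decide), gaussRatio]
  · have h := gaussMoment_even 2
    rw [Real.Gamma_nat_add_half] at h
    norm_num [Nat.doubleFactorial] at h
    rw [h, gaussRatio]
    ring

lemma integrable_gauss (k : ℕ) : Integrable fun x : ℝ => x ^ k * Real.exp (-x ^ 2) := by
  have h := integrable_rpow_mul_exp_neg_mul_sq (b := 1) one_pos (s := k)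
    (by have : (0 : ℝ) ≤ k := Nat.cast_nonneg _
        linarith)
  simpa using h

lemma prod_mul_exp_eq (s : Fin 4 → ℕ) (x : Fin 4 → ℝ) :
    (∏ i, x i ^ s i) * Real.exp (-∑ i, x i ^ 2) = ∏ i, (x i ^ s i * Real.exp (-x i ^ 2)) := by
  rw [Finset.prod_mul_distrib, ← Real.exp_sum, Finset.sum_neg_distrib]

lemma integrable_prod_gauss (s : Fin 4 → ℕ) :
    Integrable fun x : Fin 4 → ℝ => (∏ i, x i ^ s i) * Real.exp (-∑ i, x i ^ 2) := by
  simp_rw [prod_mul_exp_eq]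
  exact Integrable.fintype_prod (f := fun i (y : ℝ) => y ^ s i * Real.exp (-y ^ 2))
    fun i => integrable_gauss (s i)

lemma integral_prod_gauss (s : Fin 4 → ℕ) :
    ∫ x : Fin 4 → ℝ, (∏ i, x i ^ s i) * Real.exp (-∑ i, x i ^ 2) = ∏ i, gaussMoment (s i) := by
  simp_rw [prod_mul_exp_eq]
  exact integral_fintype_prod_volume_eq_prod (fun i (y : ℝ) => y ^ s i * Real.exp (-y ^ 2))

lemma measurableSet_ballSq (t : ℝ) : MeasurableSet (ballSq t) :=
  measurableSet_le (by fun_prop) (by fun_prop)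

/-- Homogeneity: a monomial of degree `|s|` integrates over the ball of radius `√t` to
`t ^ ((|s| + 4) / 2)` times its integral over the unit ball. -/
lemma integral_ballSq (s : Fin 4 → ℕ) {t : ℝ} (ht : 0 < t) :
    ∫ x in ballSq t, ∏ i, x i ^ s i
      = t ^ (((∑ i, s i : ℕ) : ℝ) / 2 + 2) * ∫ x in ballSq 1, ∏ i, x i ^ s i := by
  have hr : 0 < √t := Real.sqrt_pos.2 ht
  have hset : √t • ballSq 1 = ballSq t := by
    ext y
    rw [Set.mem_smul_set_iff_inv_smul_mem₀ hr.ne']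
    simp only [ballSq, Set.mem_ofPred_eq, Pi.smul_apply, smul_eq_mul, mul_pow, ← Finset.mul_sum,
      inv_pow, Real.sq_sqrt ht.le]
    rw [inv_mul_le_iff₀ ht, mul_one]
  have h := Measure.setIntegral_comp_smul_of_pos volume
    (fun x : Fin 4 → ℝ => ∏ i, x i ^ s i) (ballSq 1) hr
  rw [hset] at h
  simp only [Pi.smul_apply, smul_eq_mul, mul_pow, Finset.prod_mul_distrib,
    Finset.prod_pow_eq_pow_sum, integral_const_mul, Module.finrank_fin_fun] at h
  have hp : t ^ (((∑ i, s i : ℕ) : ℝ) / 2 + 2) = √t ^ 4 * √t ^ (∑ i, s i) := by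
    rw [Real.sqrt_eq_rpow, ← Real.rpow_natCast, ← Real.rpow_natCast, ← Real.rpow_mul ht.le,
      ← Real.rpow_mul ht.le, ← Real.rpow_add ht]
    congr 1
    push_cast
    ring
  rw [hp, mul_assoc, h, mul_inv_cancel_left₀ (pow_ne_zero _ hr.ne')]

/-- Writing `exp (-‖x‖²)` as `∫_{t ≥ ‖x‖²} exp (-t) dt` and exchanging the integrals relates the
Gaussian moments to the moments of the unit ball. -/
lemma ball_moment_mul_Gamma (s : Fin 4 → ℕ) :
    (∫ x in ballSq 1, ∏ i, x i ^ s i) * Real.Gamma (((∑ i, s i : ℕ) : ℝ) / 2 + 3)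
      = ∏ i, gaussMoment (s i) := by
  let S : Set ((Fin 4 → ℝ) × ℝ) := {z | ∑ i, z.1 i ^ 2 ≤ z.2}
  have hS : MeasurableSet S := measurableSet_le (by fun_prop) (by fun_prop)
  let f : (Fin 4 → ℝ) → ℝ → ℝ := fun x t =>
    S.indicator (fun z => (∏ i, z.1 i ^ s i) * Real.exp (-z.2)) (x, t)
  have hft : ∀ x, f x = (Set.Ici (∑ i, x i ^ 2)).indicator
      (fun t => (∏ i, x i ^ s i) * Real.exp (-t)) := fun x => by
    ext t
    simp only [f, S, Set.indicator, Set.mem_ofPred_eq, Set.mem_Ici]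
  have hfx : ∀ t, (fun x => f x t) = (ballSq t).indicator
      (fun x => (∏ i, x i ^ s i) * Real.exp (-t)) := fun t => by
    ext x
    simp only [f, S, ballSq, Set.indicator, Set.mem_ofPred_eq]
    congr
  have hint : Integrable (Function.uncurry f) (volume.prod volume) := by
    rw [integrable_prod_iff]
    · constructor
      · refine Filter.Eventually.of_forall fun x => ?_
        simp only [Function.uncurry]
        change Integrable (f x) volume
        rw [hft, integrable_indicator_iff measurableSet_Ici, integrableOn_Ici_iff_integrableOn_Ioi]
        exact (integrableOn_exp_neg_Ioi _).const_mul _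
      · refine (integrable_prod_gauss s).norm.congr (Filter.Eventually.of_forall fun x => ?_)
        simp only [Function.uncurry, hft, norm_indicator_eq_indicator_norm, norm_mul,
          Real.norm_eq_abs, Real.abs_exp]
        rw [integral_indicator measurableSet_Ici, integral_Ici_eq_integral_Ioi, integral_const_mul,
          integral_exp_neg_Ioi]
    · have : Function.uncurry f =
          S.indicator (fun z => (∏ i, z.1 i ^ s i) * Real.exp (-z.2)) := rfl
      rw [this]
      refine (Measurable.indicator ?_ hS).aestronglyMeasurable
      fun_prop
  have hswap := integral_integral_swap hint
  have hL : ∀ x, ∫ t, f x t = (∏ i, x i ^ s i) * Real.exp (-∑ i, x i ^ 2) := fun x => by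
    rw [hft, integral_indicator measurableSet_Ici, integral_Ici_eq_integral_Ioi,
      integral_const_mul, integral_exp_neg_Ioi]
  have hR : ∀ t, ∫ x, f x t = (∫ x in ballSq t, ∏ i, x i ^ s i) * Real.exp (-t) := fun t => by
    rw [hfx, integral_indicator (measurableSet_ballSq t), integral_mul_const]
  simp_rw [hL, hR] at hswap
  rw [integral_prod_gauss] at hswap
  rw [hswap, ← setIntegral_eq_integral_of_forall_compl_eq_zero (s := Set.Ici (0 : ℝ)),
    integral_Ici_eq_integral_Ioi, Real.Gamma_eq_integral (by positivity), ← integral_const_mul]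
  · refine setIntegral_congr_fun measurableSet_Ioi fun t ht => ?_
    rw [integral_ballSq s ht]
    ring_nf
  · intro t ht
    have : ballSq t = ∅ := by
      refine Set.eq_empty_of_forall_notMem fun y hy => ht ?_
      exact le_trans (Finset.sum_nonneg fun i _ => sq_nonneg (y i)) hy
    simp [this]

/-- Moments of the unit ball of `ℝ⁴` up to degree four. -/
lemma ball_moment (s : Fin 4 → ℕ) (hs : ∑ i, s i ≤ 4) :
    ∫ x in ballSq 1, ∏ i, x i ^ s i
      = Real.pi ^ 2 * (∏ i, gaussRatio (s i)) / Real.Gamma (((∑ i, s i : ℕ) : ℝ) / 2 + 3) := by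
  rw [eq_div_iff (Real.Gamma_pos_of_pos (by positivity)).ne', ball_moment_mul_Gamma]
  have h : ∀ i, gaussMoment (s i) = √Real.pi * gaussRatio (s i) := fun i =>
    gaussMoment_eq (le_trans (Finset.single_le_sum (fun _ _ => Nat.zero_le _)
      (Finset.mem_univ i)) hs)
  simp_rw [h, Finset.prod_mul_distrib, Finset.prod_const, Finset.card_univ, Fintype.card_fin]
  rw [show √Real.pi ^ 4 = (√Real.pi ^ 2) ^ 2 by ring, Real.sq_sqrt Real.pi_pos.le]

lemma integrableOn_monomial (s : Fin 4 → ℕ) :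
    IntegrableOn (fun x : Fin 4 → ℝ => ∏ i, x i ^ s i) (ballSq 1) := by
  have hc : IsCompact (ballSq 1) := by
    refine Metric.isCompact_of_isClosed_isBounded
      (isClosed_le (by fun_prop) (by fun_prop)) ?_
    refine (Metric.isBounded_closedBall (x := (0 : Fin 4 → ℝ)) (r := 1)).subset fun y hy => ?_
    rw [mem_closedBall_zero_iff, pi_norm_le_iff_of_nonneg zero_le_one]
    intro i
    have hi : y i ^ 2 ≤ 1 :=
      le_trans (Finset.single_le_sum (f := fun i => y i ^ 2) (fun _ _ => sq_nonneg _)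
        (Finset.mem_univ i)) hy
    exact (sq_le_one_iff_abs_le_one _).1 hi
  exact (Continuous.continuousOn (by fun_prop)).integrableOn_compact hc

/-- Exactness of the rule on the monomial `N x y z w = x ^ i * y ^ j * z ^ k * w ^ l`, with `2 a` in
place of `c` and the ball moment in the form given by `ball_moment`. -/
lemma rule_monomial {a b : ℝ} (ha : a ^ 2 = 1 / 8) (hb : b ^ 2 = 3 / 8) (i j k l : ℕ)
    (h : i + j + k + l ≤ 4) (N : ℝ → ℝ → ℝ → ℝ → ℝ)
    (hN : ∀ x y z w, N x y z w = x ^ i * y ^ j * z ^ k * w ^ l) :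
    Real.pi ^ 2 / 18 * (N 0 0 0 (-(2 * a)) + N 0 0 (2 * a) 0 + N b 0 (-a) 0 + N (-b) 0 (-a) 0
        + N 0 b 0 a + N 0 (-b) 0 a)
      + Real.pi ^ 2 / 54 * (N b b a (-a) + N b (-b) a (-a) + N (-b) b a (-a) + N (-b) (-b) a (-a)
        + N 0 b (-(2 * a)) (-a) + N 0 (-b) (-(2 * a)) (-a) + N b 0 a (2 * a) + N (-b) 0 a (2 * a)
        + N 0 0 (-(2 * a)) (2 * a))
      = Real.pi ^ 2 * (gaussRatio i * gaussRatio j * gaussRatio k * gaussRatio l)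
        / Real.Gamma (((i + j + k + l : ℕ) : ℝ) / 2 + 3) := by
  have hΓ0 : Real.Gamma 3 = 2 := by
    rw [show (3 : ℝ) = (2 : ℕ) + 1 by norm_num, Real.Gamma_nat_eq_factorial]; norm_num
  have hΓ2 : Real.Gamma 4 = 6 := by
    rw [show (4 : ℝ) = (3 : ℕ) + 1 by norm_num, Real.Gamma_nat_eq_factorial]
    norm_num [Nat.factorial]
  have hΓ4 : Real.Gamma 5 = 24 := by
    rw [show (5 : ℝ) = (4 : ℕ) + 1 by norm_num, Real.Gamma_nat_eq_factorial]
    norm_num [Nat.factorial]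
  have ha4 : a ^ 4 = 1 / 64 := by linear_combination (a ^ 2 + 1 / 8) * ha
  have hb4 : b ^ 4 = 9 / 64 := by linear_combination (b ^ 2 + 3 / 8) * hb
  simp only [hN]
  clear hN
  have hi : i ≤ 4 := by omega
  have hj : j ≤ 4 := by omega
  have hk : k ≤ 4 := by omega
  have hl : l ≤ 4 := by omega
  -- When the degree is odd, some `gaussRatio` factor vanishes, so no value of `Γ` is needed.
  interval_cases i <;> interval_cases j <;> try omega
  all_goals interval_cases k <;> try omega
  all_goals interval_cases l <;> try omega
  all_goals
    norm_num [gaussRatio, hΓ0, hΓ2, hΓ4]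
    try ring_nf
    try simp only [ha, ha4, hb, hb4]
    try ring_nf

/-- 15 point rule of degree 4 for `S_4` (group 2), with all positive weights. -/
theorem stmt_10 (a b c W1 W2 : ℝ)
    (ha : a = Real.sqrt (1 / 8))
    (hb : b = Real.sqrt (3 / 8))
    (hc : c = Real.sqrt (1 / 2))
    (hW1 : W1 = Real.pi ^ 2 / 18)
    (hW2 : W2 = Real.pi ^ 2 / 54)
    :
    (0 < W1 ∧ 0 < W2)
    ∧ (∀ q : MvPolynomial (Fin 4) ℝ, q.totalDegree ≤ 4 →
      W1 * (MvPolynomial.eval ![0, 0, 0, -c] q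
          + MvPolynomial.eval ![0, 0, c, 0] q
          + MvPolynomial.eval ![b, 0, -a, 0] q
          + MvPolynomial.eval ![-b, 0, -a, 0] q
          + MvPolynomial.eval ![0, b, 0, a] q
          + MvPolynomial.eval ![0, -b, 0, a] q)
        + W2 * (MvPolynomial.eval ![b, b, a, -a] q
          + MvPolynomial.eval ![b, -b, a, -a] q
          + MvPolynomial.eval ![-b, b, a, -a] q
          + MvPolynomial.eval ![-b, -b, a, -a] q
          + MvPolynomial.eval ![0, b, -c, -a] q
          + MvPolynomial.eval ![0, -b, -c, -a] q
          + MvPolynomial.eval ![b, 0, a, c] q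
          + MvPolynomial.eval ![-b, 0, a, c] q
          + MvPolynomial.eval ![0, 0, -c, c] q)
        = ∫ x in {y : Fin 4 → ℝ | ∑ t, y t ^ 2 ≤ 1}, MvPolynomial.eval x q) := by
  have hc2 : c = 2 * a := by
    rw [hc, ha, show (1 / 2 : ℝ) = 2 ^ 2 * (1 / 8) by norm_num, Real.sqrt_mul (by norm_num),
      Real.sqrt_sq (by norm_num)]
  have ha2 : a ^ 2 = 1 / 8 := by rw [ha, Real.sq_sqrt (by norm_num)]
  have hb2 : b ^ 2 = 3 / 8 := by rw [hb, Real.sq_sqrt (by norm_num)]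
  have hpi := Real.pi_pos
  refine ⟨⟨by rw [hW1]; positivity, by rw [hW2]; positivity⟩, fun q hq => ?_⟩
  change _ = ∫ x in ballSq 1, MvPolynomial.eval x q
  simp only [MvPolynomial.eval_eq']
  rw [integral_finsetSum (f := fun (d : Fin 4 →₀ ℕ) (x : Fin 4 → ℝ) =>
    q.coeff d * ∏ i, x i ^ d i) _ fun d _ => (integrableOn_monomial d).const_mul _]
  simp only [← Finset.sum_add_distrib, Finset.mul_sum]
  refine Finset.sum_congr rfl fun d hd => ?_
  have hdeg : ∑ i, d i ≤ 4 := by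
    have h := MvPolynomial.le_totalDegree hd
    rw [Finsupp.sum_fintype _ _ fun _ => rfl] at h
    exact h.trans hq
  rw [integral_const_mul, ball_moment _ hdeg, hW1, hW2, hc2]
  have key := rule_monomial ha2 hb2 (d 0) (d 1) (d 2) (d 3)
    (by simpa [Fin.sum_univ_four] using hdeg) _ fun _ _ _ _ => rfl
  simp only [Fin.prod_univ_four, Fin.sum_univ_four, ← key, Matrix.cons_val]
  ring
end

section
/- Set a = (√6−1)/15, b = (2√6−2)/15, c = 1/3, e = (4√6−4)/15, f = (√6+4)/15, g = (3√6+2)/15, h = (4√6+1)/15, and weights W₀ = 2π²/105, W₁ = 4π²/105, W₂ = 2π²/105. Consider the 22 nodes in ℝ⁵: the origin with weight W₀; the point (c,c,c,c,c) with weight W₁; the 5 distinct coordinate permutations of (−h,a,a,a,a), each with weight W₁; the 10 distinct coordinate permutations of (−b,−b,−b,g,g), each with weight W₂; and the 5 distinct coordinate permutations of (e,−f,−f,−f,−f), each with weight W₂. All weights are positive, all nodes lie inside the unit ball, and Σ W_i p(x_i) = ∫_{‖x‖≤1} p(x) dx for every real polynomial p in 5 variables of total degree at most 4. -/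
/-!
By linearity it suffices to check the monomials `x ^ m` of degree at most 4.

The moments of the unit ball come from the Gaussian ones (`gaussian_eq_Gamma_mul_ball`): for a
monomial `P` of degree `d` on `ℝ⁵`, `∫ P(x) exp(-|x|²) dx = Γ((5 + d)/2 + 1) ∫_{|x| ≤ 1} P(x) dx`,
and the left-hand side is a product of one-dimensional Gaussian moments. The result is
`ball_moment`.

On the other side, the nodes scaled by 15 have coordinates in `ℤ[√6]`, and the weights are
`2π²/105` times `1`, `2` and `1`. The cubature identity for each of the 126 monomials thus becomes
an identity in `ℤ[√6]`, which is decided by evaluation (`nodeSum_zsqrtd`) and transported to `ℝ`.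
-/

open MeasureTheory

/-- The factor contributed by the exponent `k ≤ 4` of one coordinate to a monomial moment:
`(k - 1)!!` for even `k` and `0` for odd `k`. Values at `k > 4` are irrelevant. -/
def doubleFactorialMoment : ℕ → ℤ
  | 0 => 1
  | 2 => 1
  | 4 => 3
  | _ => 0

/-- The factor depending only on the (even) degree `d ≤ 4` in the monomial moments of the ball,
normalised by `W₂ / 15 ^ d`, where `W₂ = 2π²/105` and `15` is the common denominator of the nodes.
Odd degrees never matter, because `doubleFactorialMoment` then vanishes at some exponent. -/
def degreeFactor : ℕ → ℤ
  | 0 => 28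
  | 2 => 900
  | _ => 22500

/-! ### One-dimensional Gaussian moments -/

lemma integral_pow_mul_exp_odd {k : ℕ} (hk : Odd k) :
    ∫ x : ℝ, x ^ k * Real.exp (-x ^ 2) = 0 := by
  have h := integral_neg_eq_self (fun x : ℝ => x ^ k * Real.exp (-x ^ 2)) volume
  simp only [hk.neg_pow, neg_sq, neg_mul, integral_neg] at h
  linarith

lemma integral_pow_mul_exp_even {n : ℕ} (hn : n ≤ 2) :
    ∫ x : ℝ, x ^ (2 * n) * Real.exp (-x ^ 2)
      = doubleFactorialMoment (2 * n) * √Real.pi / 2 ^ n := by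
  have h1 : ∫ x : ℝ, x ^ (2 * n) * Real.exp (-x ^ 2) = Real.Gamma (n + 1 / 2) := by
    have h2 := integral_comp_abs (f := fun x : ℝ => x ^ (2 * n) * Real.exp (-x ^ 2))
    simp only [(even_two_mul n).pow_abs, sq_abs] at h2
    have h3 := integral_rpow_mul_exp_neg_mul_rpow (p := 2) (q := (2 * n : ℕ)) (b := 1)
      (by norm_num) (by have : (0 : ℝ) ≤ (2 * n : ℕ) := by positivity
                        linarith) one_pos
    simp only [Real.rpow_natCast, Real.rpow_two, neg_one_mul, Real.one_rpow] at h3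
    rw [h2, h3]
    push_cast
    rw [show ((2 * n + 1) / 2 : ℝ) = n + 1 / 2 by ring]
    ring
  rw [h1, Real.Gamma_nat_add_half]
  interval_cases n <;> simp [doubleFactorialMoment, Nat.doubleFactorial]

lemma integrable_pow_mul_exp (k : ℕ) :
    Integrable (fun x : ℝ => x ^ k * Real.exp (-x ^ 2)) := by
  have h := integrable_rpow_mul_exp_neg_mul_sq (b := 1) one_pos (s := (k : ℝ))
    (by have : (0 : ℝ) ≤ k := by positivity
        linarith)
  simpa only [Real.rpow_natCast, neg_one_mul] using h

/-! ### Moments of the unit ball -/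

lemma prod_mul_exp (m : Fin 5 → ℕ) (x : Fin 5 → ℝ) :
    (∏ i, x i ^ m i) * Real.exp (-∑ i, x i ^ 2) = ∏ i, (x i ^ m i * Real.exp (-x i ^ 2)) := by
  rw [Finset.prod_mul_distrib, ← Real.exp_sum, Finset.sum_neg_distrib]

lemma integrable_prod_mul_exp (m : Fin 5 → ℕ) :
    Integrable (fun x : Fin 5 → ℝ => (∏ i, x i ^ m i) * Real.exp (-∑ i, x i ^ 2)) := by
  simp only [prod_mul_exp]
  exact Integrable.fintype_prod (μ := fun _ => volume)
    (f := fun i (t : ℝ) => t ^ m i * Real.exp (-t ^ 2)) fun i => integrable_pow_mul_exp (m i)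

open scoped Pointwise in
/-- Homogeneity: a monomial integrated over the ball of squared radius `r`. -/
lemma setIntegral_ball_scale (m : Fin 5 → ℕ) {r : ℝ} (hr : 0 < r) :
    ∫ x in {y : Fin 5 → ℝ | ∑ t, y t ^ 2 ≤ r}, ∏ i, x i ^ m i
      = r ^ ((5 + (∑ i, m i : ℕ) : ℝ) / 2)
        * ∫ x in {y : Fin 5 → ℝ | ∑ t, y t ^ 2 ≤ 1}, ∏ i, x i ^ m i := by
  have hs : 0 < √r := Real.sqrt_pos.2 hr
  have h := Measure.setIntegral_comp_smul_of_pos volume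
    (fun x : Fin 5 → ℝ => ∏ i, x i ^ m i) {y : Fin 5 → ℝ | ∑ t, y t ^ 2 ≤ 1} hs
  have hset : √r • {y : Fin 5 → ℝ | ∑ t, y t ^ 2 ≤ 1} = {y : Fin 5 → ℝ | ∑ t, y t ^ 2 ≤ r} := by
    ext y
    rw [Set.mem_smul_set_iff_inv_smul_mem₀ hs.ne']
    simp only [Set.mem_ofPred_eq, Pi.smul_apply, smul_eq_mul, mul_pow, ← Finset.mul_sum, inv_pow,
      Real.sq_sqrt hr.le]
    rw [inv_mul_le_iff₀ hr, mul_one]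
  rw [hset] at h
  simp only [Pi.smul_apply, smul_eq_mul, mul_pow, Finset.prod_mul_distrib,
    Finset.prod_pow_eq_pow_sum, integral_const_mul, Module.finrank_fin_fun] at h
  rw [eq_inv_mul_iff_mul_eq₀ (by positivity)] at h
  rw [← h, ← mul_assoc, ← pow_add, Real.sqrt_eq_rpow, ← Real.rpow_mul_natCast hr.le]
  congr 2
  push_cast
  ring

/-- The Gaussian moment of a monomial is a Gamma factor times its moment over the unit ball.
This follows by writing `exp (-|x|²) = ∫_{r ≥ |x|²} exp (-r) dr`, swapping the integrals and using
homogeneity on the ball `|x|² ≤ r`. -/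
lemma gaussian_eq_Gamma_mul_ball (m : Fin 5 → ℕ) :
    ∫ x : Fin 5 → ℝ, (∏ i, x i ^ m i) * Real.exp (-∑ i, x i ^ 2)
      = Real.Gamma ((5 + (∑ i, m i : ℕ) : ℝ) / 2 + 1)
        * ∫ x in {y : Fin 5 → ℝ | ∑ t, y t ^ 2 ≤ 1}, ∏ i, x i ^ m i := by
  set P : (Fin 5 → ℝ) → ℝ := fun x => ∏ i, x i ^ m i with hP
  set Q : (Fin 5 → ℝ) → ℝ := fun x => ∑ i, x i ^ 2 with hQ
  have hQ0 : ∀ x, 0 ≤ Q x := fun x => Finset.sum_nonneg fun i _ => sq_nonneg _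
  have hPc : Continuous P := by fun_prop
  have hQc : Continuous Q := by fun_prop
  -- `F x r = P x * exp (-r)` on the region `|x|² ≤ r`, and zero elsewhere.
  let F : (Fin 5 → ℝ) → ℝ → ℝ := fun x r =>
    {z : (Fin 5 → ℝ) × ℝ | Q z.1 ≤ z.2}.indicator (fun z => P z.1 * Real.exp (-z.2)) (x, r)
  have hF1 : ∀ x, F x = (Set.Ici (Q x)).indicator fun r => P x * Real.exp (-r) := by
    intro x; ext r; simp [F, Set.indicator_apply]
  have hF2 : ∀ r, (fun x => F x r) = {y | Q y ≤ r}.indicator fun x => P x * Real.exp (-r) := by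
    intro r; ext x; simp [F, Set.indicator_apply]
  have hint : Integrable (Function.uncurry F) (volume.prod volume) := by
    have hmeas : AEStronglyMeasurable (Function.uncurry F) (volume.prod volume) := by
      have hset : MeasurableSet {z : (Fin 5 → ℝ) × ℝ | Q z.1 ≤ z.2} :=
        measurableSet_le (hQc.measurable.comp measurable_fst) measurable_snd
      have hc : Continuous fun z : (Fin 5 → ℝ) × ℝ => P z.1 * Real.exp (-z.2) := by fun_prop
      exact (hc.measurable.indicator hset).aestronglyMeasurable
    rw [integrable_prod_iff hmeas]
    refine ⟨Filter.Eventually.of_forall fun x => ?_, ?_⟩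
    · change Integrable (F x) volume
      rw [hF1, integrable_indicator_iff measurableSet_Ici, integrableOn_Ici_iff_integrableOn_Ioi]
      exact (integrableOn_exp_neg_Ioi (Q x)).const_mul (P x)
    · refine (integrable_prod_mul_exp m).norm.congr (Filter.Eventually.of_forall fun x => ?_)
      change _ = ∫ r, ‖F x r‖
      simp only [hF1, norm_indicator_eq_indicator_norm]
      rw [integral_indicator measurableSet_Ici, integral_Ici_eq_integral_Ioi]
      simp only [norm_mul, Real.norm_eq_abs, Real.abs_exp]
      rw [integral_const_mul, integral_exp_neg_Ioi]
  have hswap := integral_integral_swap hint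
  have hL : ∀ x, ∫ r, F x r = P x * Real.exp (-Q x) := by
    intro x
    rw [hF1, integral_indicator measurableSet_Ici, integral_Ici_eq_integral_Ioi,
      integral_const_mul, integral_exp_neg_Ioi]
  have hR : ∀ r, ∫ x, F x r = (∫ x in {y | Q y ≤ r}, P x) * Real.exp (-r) := by
    intro r
    rw [hF2, integral_indicator (measurableSet_le hQc.measurable measurable_const),
      integral_mul_const]
  simp only [hL, hR] at hswap
  change ∫ x, P x * Real.exp (-Q x) = _
  rw [hswap, Real.Gamma_eq_integral (by positivity), ← integral_mul_const,
    ← setIntegral_eq_integral_of_forall_compl_eq_zero (s := Set.Ici 0),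
    integral_Ici_eq_integral_Ioi]
  · refine setIntegral_congr_fun measurableSet_Ioi fun r hr => ?_
    simp only [hP, hQ]
    rw [setIntegral_ball_scale m hr, add_sub_cancel_right]
    ring
  · intro r hr
    have : {y | Q y ≤ r} = ∅ := by
      ext y
      have := hQ0 y
      simp only [Set.mem_Ici, not_le] at hr
      simp only [Set.mem_ofPred_eq, Set.mem_empty_iff_false, iff_false, not_le]
      linarith
    simp [this]

/-- Moments of the unit ball up to degree 4, in the normalisation of the integer identity
`nodeSum_zsqrtd`. -/
lemma ball_moment_s12 (m : Fin 5 → ℕ) (hm : ∑ i, m i ≤ 4) :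
    ∫ x in {y : Fin 5 → ℝ | ∑ t, y t ^ 2 ≤ 1}, ∏ i, x i ^ m i
      = 2 * Real.pi ^ 2 / 105 * (degreeFactor (∑ i, m i) *
        ∏ i, (doubleFactorialMoment (m i) : ℝ)) / 15 ^ (∑ i, m i) := by
  have h := gaussian_eq_Gamma_mul_ball m
  have hG : Real.Gamma ((5 + (∑ i, m i : ℕ) : ℝ) / 2 + 1) ≠ 0 :=
    (Real.Gamma_pos_of_pos (by positivity)).ne'
  simp only [prod_mul_exp] at h
  rw [volume_pi, integral_fintype_prod_eq_prod (fun i (t : ℝ) => t ^ m i * Real.exp (-t ^ 2)),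
    ← volume_pi] at h
  by_cases hodd : ∃ i, Odd (m i)
  · obtain ⟨i, hi⟩ := hodd
    rw [Finset.prod_eq_zero (Finset.mem_univ i) (integral_pow_mul_exp_odd hi)] at h
    have hd : (doubleFactorialMoment (m i) : ℝ) = 0 := by
      have : m i ≤ 4 := (Finset.single_le_sum (fun _ _ => Nat.zero_le _)
        (Finset.mem_univ i)).trans hm
      generalize m i = k at *
      interval_cases k <;> first | rfl | (simp [doubleFactorialMoment]; done) | (revert hi; decide)
    rw [Finset.prod_eq_zero (Finset.mem_univ i) hd]
    simpa using (mul_eq_zero.1 h.symm).resolve_left hG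
  · push Not at hodd
    simp only [Nat.not_odd_iff_even, even_iff_two_dvd] at hodd
    choose n hn using hodd
    obtain rfl : m = fun i => 2 * n i := funext hn
    simp only [← Finset.mul_sum] at *
    have hn2 : ∀ i, n i ≤ 2 := fun i => by
      have : n i ≤ ∑ i, n i := Finset.single_le_sum (fun _ _ => Nat.zero_le _) (Finset.mem_univ i)
      omega
    rw [Finset.prod_congr rfl fun i _ => integral_pow_mul_exp_even (hn2 i),
      Finset.prod_div_distrib, Finset.prod_mul_distrib, Finset.prod_pow_eq_pow_sum] at h
    simp only [Finset.prod_const, Finset.card_univ, Fintype.card_fin] at h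
    generalize (∏ i, (doubleFactorialMoment (2 * n i) : ℝ)) = D at *
    generalize (∫ x in {y : Fin 5 → ℝ | ∑ t, y t ^ 2 ≤ 1}, ∏ i, x i ^ (2 * n i)) = I at *
    have hS : ∑ i, n i ≤ 2 := by omega
    generalize ∑ i, n i = S at *
    have hpi : √Real.pi ^ 2 = Real.pi := Real.sq_sqrt Real.pi_pos.le
    have hpos : √Real.pi ≠ 0 := (Real.sqrt_pos.2 Real.pi_pos).ne'
    rw [show ((5 + (2 * S : ℕ) : ℝ) / 2 + 1) = ((S + 3 : ℕ) : ℝ) + 1 / 2 by push_cast; ring,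
      Real.Gamma_nat_add_half] at h
    rw [← hpi]
    generalize √Real.pi = p at *
    interval_cases S <;> norm_num [degreeFactor, Nat.doubleFactorial] at h ⊢ <;>
      refine mul_left_cancel₀ hpos ?_ <;> linarith

/-! ### The node sums -/

/-- The monomial with exponents `m` at the point `v`. -/
def monomialAt {R : Type*} [CommRing R] (m : Fin 5 → ℕ) (v : Fin 5 → R) : R :=
  v 0 ^ m 0 * v 1 ^ m 1 * v 2 ^ m 2 * v 3 ^ m 3 * v 4 ^ m 4

/-- The cubature sum of a monomial, with the weights divided by `2π²/105`. -/
def nodeSum {R : Type*} [CommRing R] (a b c e f g h : R) (m : Fin 5 → ℕ) : R :=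
  monomialAt m ![0, 0, 0, 0, 0]
    + 2 * (monomialAt m ![c, c, c, c, c]
      + monomialAt m ![-h, a, a, a, a]
      + monomialAt m ![a, -h, a, a, a]
      + monomialAt m ![a, a, -h, a, a]
      + monomialAt m ![a, a, a, -h, a]
      + monomialAt m ![a, a, a, a, -h])
    + (monomialAt m ![-b, -b, -b, g, g]
      + monomialAt m ![-b, -b, g, -b, g]
      + monomialAt m ![-b, -b, g, g, -b]
      + monomialAt m ![-b, g, -b, -b, g]
      + monomialAt m ![-b, g, -b, g, -b]
      + monomialAt m ![-b, g, g, -b, -b]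
      + monomialAt m ![g, -b, -b, -b, g]
      + monomialAt m ![g, -b, -b, g, -b]
      + monomialAt m ![g, -b, g, -b, -b]
      + monomialAt m ![g, g, -b, -b, -b]
      + monomialAt m ![-f, -f, -f, -f, e]
      + monomialAt m ![-f, -f, -f, e, -f]
      + monomialAt m ![-f, -f, e, -f, -f]
      + monomialAt m ![-f, e, -f, -f, -f]
      + monomialAt m ![e, -f, -f, -f, -f])

/-- The cubature identities for the nodes scaled by 15; the arguments are `15a, …, 15h` written as
`⟨x, y⟩ = x + y√6`. -/
lemma nodeSum_zsqrtd : ∀ i j k l n : Fin 5, (i + j + k + l + n : ℕ) ≤ 4 →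
    nodeSum (R := ℤ√6) ⟨-1, 1⟩ ⟨-2, 2⟩ ⟨5, 0⟩ ⟨-4, 4⟩ ⟨4, 1⟩ ⟨2, 3⟩ ⟨1, 4⟩ ![i, j, k, l, n]
      = ⟨degreeFactor (i + j + k + l + n : ℕ) * (doubleFactorialMoment i * doubleFactorialMoment j
          * doubleFactorialMoment k * doubleFactorialMoment l * doubleFactorialMoment n), 0⟩ := by
  decide +kernel

lemma map_nodeSum {R S : Type*} [CommRing R] [CommRing S] (φ : R →+* S) (a b c e f g h : R)
    (m : Fin 5 → ℕ) :
    φ (nodeSum a b c e f g h m) = nodeSum (φ a) (φ b) (φ c) (φ e) (φ f) (φ g) (φ h) m := by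
  have h2 : φ 2 = 2 := map_ofNat φ 2
  simp [nodeSum, monomialAt, h2]

lemma monomialAt_div (m : Fin 5 → ℕ) (x y z u w : ℝ) :
    monomialAt m ![x / 15, y / 15, z / 15, u / 15, w / 15]
      = monomialAt m ![x, y, z, u, w] / 15 ^ ∑ i, m i := by
  simp only [monomialAt, Fin.sum_univ_five, pow_add]
  simp [div_pow]
  field_simp

lemma nodeSum_div (a b c e f g h : ℝ) (m : Fin 5 → ℕ) :
    nodeSum (a / 15) (b / 15) (c / 15) (e / 15) (f / 15) (g / 15) (h / 15) m
      = nodeSum a b c e f g h m / 15 ^ ∑ i, m i := by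
  have h0 := monomialAt_div m 0 0 0 0 0
  simp only [zero_div] at h0
  simp only [nodeSum, ← neg_div, monomialAt_div]
  linear_combination h0

lemma nodeSum_real (m : Fin 5 → ℕ) (hm : ∑ i, m i ≤ 4) :
    nodeSum ((√6 - 1) / 15) ((2 * √6 - 2) / 15) (1 / 3) ((4 * √6 - 4) / 15) ((√6 + 4) / 15)
        ((3 * √6 + 2) / 15) ((4 * √6 + 1) / 15) m
      = degreeFactor (∑ i, m i) * (∏ i, (doubleFactorialMoment (m i) : ℝ)) / 15 ^ ∑ i, m i := by
  have hlt : ∀ i, m i < 5 := fun i => by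
    have : m i ≤ ∑ i, m i := Finset.single_le_sum (fun _ _ => Nat.zero_le _) (Finset.mem_univ i)
    omega
  have hm5 := hm
  rw [Fin.sum_univ_five] at hm5
  have key := nodeSum_zsqrtd ⟨m 0, hlt 0⟩ ⟨m 1, hlt 1⟩ ⟨m 2, hlt 2⟩ ⟨m 3, hlt 3⟩ ⟨m 4, hlt 4⟩ hm5
  have hvec : ![m 0, m 1, m 2, m 3, m 4] = m := by
    ext i; fin_cases i <;> rfl
  simp only [hvec] at key
  have key2 := congrArg (Zsqrtd.lift ⟨√6, by simp⟩ : ℤ√6 →+* ℝ) key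
  rw [map_nodeSum] at key2
  simp only [Zsqrtd.lift_apply_apply] at key2
  push_cast at key2
  rw [show (1 / 3 : ℝ) = 5 / 15 by norm_num, nodeSum_div, Fin.sum_univ_five, Fin.prod_univ_five]
  congr 1
  convert key2 using 1
  · congr 1 <;> ring
  · ring

lemma eval_monomial_eq_monomialAt (m : Fin 5 →₀ ℕ) (r : ℝ) (v : Fin 5 → ℝ) :
    MvPolynomial.eval v (MvPolynomial.monomial m r) = r * monomialAt m v := by
  rw [MvPolynomial.eval_monomial, Finsupp.prod_fintype _ _ (by simp), Fin.prod_univ_five]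
  rfl

lemma isCompact_ball : IsCompact {y : Fin 5 → ℝ | ∑ t, y t ^ 2 ≤ 1} := by
  refine Metric.isCompact_of_isClosed_isBounded
    (isClosed_le (by fun_prop) continuous_const) ?_
  refine (Metric.isBounded_closedBall (x := (0 : Fin 5 → ℝ)) (r := 1)).subset fun y hy => ?_
  rw [mem_closedBall_zero_iff, pi_norm_le_iff_of_nonneg zero_le_one]
  intro i
  rw [Real.norm_eq_abs, ← sq_le_one_iff_abs_le_one]
  exact (Finset.single_le_sum (f := fun t => y t ^ 2) (fun _ _ => sq_nonneg _)
    (Finset.mem_univ i)).trans hy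

lemma integrableOn_ball (q : MvPolynomial (Fin 5) ℝ) :
    IntegrableOn (fun x => MvPolynomial.eval x q) {y : Fin 5 → ℝ | ∑ t, y t ^ 2 ≤ 1} :=
  (MvPolynomial.continuous_eval q).continuousOn.integrableOn_compact isCompact_ball

/-- 22 point rule of degree 4 for `S_5`, with positive weights and all nodes inside the unit ball. -/
theorem stmt_12 (a b c e f g h W0 W1 W2 : ℝ)
    (ha : a = (Real.sqrt 6 - 1) / 15)
    (hb : b = (2 * Real.sqrt 6 - 2) / 15)
    (hc : c = 1 / 3)
    (he : e = (4 * Real.sqrt 6 - 4) / 15)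
    (hf : f = (Real.sqrt 6 + 4) / 15)
    (hg : g = (3 * Real.sqrt 6 + 2) / 15)
    (hh : h = (4 * Real.sqrt 6 + 1) / 15)
    (hW0 : W0 = 2 * Real.pi ^ 2 / 105)
    (hW1 : W1 = 4 * Real.pi ^ 2 / 105)
    (hW2 : W2 = 2 * Real.pi ^ 2 / 105)
    :
    (0 < W0 ∧ 0 < W1 ∧ 0 < W2)
    ∧ (∀ v ∈ ([![0, 0, 0, 0, 0],
          ![c, c, c, c, c],
          ![-h, a, a, a, a],
          ![a, -h, a, a, a],
          ![a, a, -h, a, a],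
          ![a, a, a, -h, a],
          ![a, a, a, a, -h],
          ![-b, -b, -b, g, g],
          ![-b, -b, g, -b, g],
          ![-b, -b, g, g, -b],
          ![-b, g, -b, -b, g],
          ![-b, g, -b, g, -b],
          ![-b, g, g, -b, -b],
          ![g, -b, -b, -b, g],
          ![g, -b, -b, g, -b],
          ![g, -b, g, -b, -b],
          ![g, g, -b, -b, -b],
          ![-f, -f, -f, -f, e],
          ![-f, -f, -f, e, -f],
          ![-f, -f, e, -f, -f],
          ![-f, e, -f, -f, -f],
          ![e, -f, -f, -f, -f]] : List (Fin 5 → ℝ)), ∑ t, v t ^ 2 < 1)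
    ∧ (∀ q : MvPolynomial (Fin 5) ℝ, q.totalDegree ≤ 4 →
      W0 * (MvPolynomial.eval ![0, 0, 0, 0, 0] q)
        + W1 * (MvPolynomial.eval ![c, c, c, c, c] q
          + MvPolynomial.eval ![-h, a, a, a, a] q
          + MvPolynomial.eval ![a, -h, a, a, a] q
          + MvPolynomial.eval ![a, a, -h, a, a] q
          + MvPolynomial.eval ![a, a, a, -h, a] q
          + MvPolynomial.eval ![a, a, a, a, -h] q)
        + W2 * (MvPolynomial.eval ![-b, -b, -b, g, g] q
          + MvPolynomial.eval ![-b, -b, g, -b, g] q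
          + MvPolynomial.eval ![-b, -b, g, g, -b] q
          + MvPolynomial.eval ![-b, g, -b, -b, g] q
          + MvPolynomial.eval ![-b, g, -b, g, -b] q
          + MvPolynomial.eval ![-b, g, g, -b, -b] q
          + MvPolynomial.eval ![g, -b, -b, -b, g] q
          + MvPolynomial.eval ![g, -b, -b, g, -b] q
          + MvPolynomial.eval ![g, -b, g, -b, -b] q
          + MvPolynomial.eval ![g, g, -b, -b, -b] q
          + MvPolynomial.eval ![-f, -f, -f, -f, e] q
          + MvPolynomial.eval ![-f, -f, -f, e, -f] q
          + MvPolynomial.eval ![-f, -f, e, -f, -f] q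
          + MvPolynomial.eval ![-f, e, -f, -f, -f] q
          + MvPolynomial.eval ![e, -f, -f, -f, -f] q)
        = ∫ x in {y : Fin 5 → ℝ | ∑ t, y t ^ 2 ≤ 1}, MvPolynomial.eval x q) := by
  have h6 : √6 ^ 2 = 6 := Real.sq_sqrt (by norm_num)
  have h6u : √6 < 3 := by
    rw [Real.sqrt_lt' (by norm_num)]; norm_num
  have h6l : 2 < √6 := by
    rw [Real.lt_sqrt (by norm_num)]; norm_num
  refine ⟨?_, ?_, ?_⟩
  · subst hW0 hW1 hW2
    have := Real.pi_pos
    refine ⟨?_, ?_, ?_⟩ <;> positivity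
  · intro v hv
    simp only [List.mem_cons, List.not_mem_nil, or_false] at hv
    -- The squared norm depends only on the orbit of the node under coordinate permutations.
    have hcN : c ^ 2 * 5 < 1 := by subst hc; norm_num
    have hhN : h ^ 2 + a ^ 2 * 4 < 1 := by subst hh ha; nlinarith
    have hbN : b ^ 2 * 3 + g ^ 2 * 2 < 1 := by subst hb hg; nlinarith
    have hfN : f ^ 2 * 4 + e ^ 2 < 1 := by subst hf he; nlinarith
    rcases hv with rfl | rfl | rfl | rfl | rfl | rfl | rfl | rfl | rfl | rfl | rfl | rfl | rfl
        | rfl | rfl | rfl | rfl | rfl | rfl | rfl | rfl | rfl <;>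
      simp [Fin.sum_univ_five] <;> linarith
  · intro q hq
    -- Expand the two sides over the monomials of `q`.
    have hint : ∫ x in {y : Fin 5 → ℝ | ∑ t, y t ^ 2 ≤ 1}, MvPolynomial.eval x q
        = ∑ m ∈ q.support, ∫ x in {y : Fin 5 → ℝ | ∑ t, y t ^ 2 ≤ 1},
            MvPolynomial.eval x (MvPolynomial.monomial m (q.coeff m)) := by
      rw [← integral_finsetSum _ fun m _ => integrableOn_ball _]
      simp only [← map_sum, ← MvPolynomial.as_sum]
    have hev : ∀ v, MvPolynomial.eval v q
        = ∑ m ∈ q.support, q.coeff m * monomialAt m v := by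
      intro v
      conv_lhs => rw [q.as_sum, map_sum]
      simp only [eval_monomial_eq_monomialAt]
    rw [hint]
    simp only [hev, ← Finset.sum_add_distrib, Finset.mul_sum]
    refine Finset.sum_congr rfl fun m hm => ?_
    have hdeg : ∑ i, m i ≤ 4 := by
      have := MvPolynomial.le_totalDegree hm
      rw [Finsupp.sum_fintype _ _ (by simp)] at this
      exact this.trans hq
    have hM : ∫ x in {y : Fin 5 → ℝ | ∑ t, y t ^ 2 ≤ 1},
        MvPolynomial.eval x (MvPolynomial.monomial m (q.coeff m))
        = q.coeff m * (2 * Real.pi ^ 2 / 105 * nodeSum a b c e f g h m) := by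
      simp only [MvPolynomial.eval_monomial, Finsupp.prod_fintype _ _ (fun _ => pow_zero _)]
      rw [integral_const_mul, ball_moment_s12 m hdeg, ha, hb, hc, he, hf, hg, hh,
        nodeSum_real m hdeg]
      ring
    rw [hM, hW0, hW1, hW2, nodeSum]
    ring
end
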